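/- Let N ≥ 2, let μ > 0, λ + μ > 0, a > 0, and γ > 1 be real constants. Suppose (ρ, v) is a smooth solution on ℝ^N of the stationary compressible Navier–Stokes system: div(ρv) = 0, div(ρ v⊗v) = -∇p + μΔv + (μ+λ)∇(div v), with pressure law p = aρ^γ and ρ ≥ 0. Assume ρ ∈ L^∞(ℝ^N), ∇v ∈ L²(ℝ^N), v ∈ L^{N/(N-1)}(ℝ^N), and additionally v ∈ L^{3N/(N-1)}(ℝ^N) in case N ≥ 7. Then v = 0 identically on ℝ^N and ρ is a constant function on ℝ^N. -/

import Mathlib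

open MeasureTheory Real Filter

noncomputable section

/-- Partial derivative `∂ⱼ f (x)` of a scalar function on `ℝ^N`. -/
def pd (N : ℕ) (f : EuclideanSpace ℝ (Fin N) → ℝ) (j : Fin N)
    (x : EuclideanSpace ℝ (Fin N)) : ℝ :=
  fderiv ℝ f x (EuclideanSpace.single j 1)

/-- Divergence of a vector field on `ℝ^N`. -/
def divV (N : ℕ) (v : EuclideanSpace ℝ (Fin N) → EuclideanSpace ℝ (Fin N))
    (x : EuclideanSpace ℝ (Fin N)) : ℝ :=
  ∑ j, pd N (fun y => v y j) j x

/-- Laplacian of a scalar function on `ℝ^N`. -/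
def lap (N : ℕ) (f : EuclideanSpace ℝ (Fin N) → ℝ)
    (x : EuclideanSpace ℝ (Fin N)) : ℝ :=
  ∑ j, pd N (pd N f j) j x

/-!
Testing the momentum equation with `v` turns it into the energy identity
`div J - div H = μ |∇v|² + (μ + λ) (div v)²`. Here `J` collects `∇|v|²`, `(div v) v` and
`|v|² ρ v`, and `H = γ / (γ - 1) p v` absorbs the pressure because `div (ρ v) = 0`.

The integral of a divergence over `ℝ^N` vanishes for fields in `L¹`, and also for fields in
`L^{N/(N-1)}`: the gradients of the cutoffs at scale `R` are bounded in `L^N` uniformly in `R`,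
and they live where the field has small norm. The second case applies to `H`, since `ρ` is bounded.
The first applies to `J` once `v ∈ L² ∩ L³`. For `N ≤ 6` this follows from Sobolev's inequality
(applied to `|v|²` when `N = 2`), and for `N ≥ 7` from interpolation between the two assumed
exponents. Hence `∇v = 0`, so `v` is a constant in some `L^q` and vanishes; then `∇p = 0`.
-/

open scoped ENNReal NNReal Topology

section Interpolation

variable {α E : Type*} {m : MeasurableSpace α} {μ : Measure α} [NormedAddCommGroup E]
  {f : α → E} {p q r : ℝ≥0∞}

theorem memLp_ofReal_of_integrable_norm_rpow {s : ℝ} (hf : AEStronglyMeasurable f μ) (hs : 0 < s)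
    (hf_int : Integrable (fun x => ‖f x‖ ^ s) μ) : MemLp f (ENNReal.ofReal s) μ := by
  rw [← integrable_norm_rpow_iff hf (by simpa) ENNReal.ofReal_ne_top, ENNReal.toReal_ofReal hs.le]
  exact hf_int

theorem measure_one_le_norm_ne_top (hf : MemLp f p μ) (hp₀ : p ≠ 0) (hp : p ≠ ∞) :
    μ {x | 1 ≤ ‖f x‖} ≠ ∞ := by
  have markov := meas_ge_le_mul_pow_eLpNorm_enorm μ hp₀ hp hf.1 one_ne_zero (by simp)
  simp only [inv_one, ENNReal.one_rpow, one_mul, ← ofReal_norm, ENNReal.one_le_ofReal] at markov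
  exact (markov.trans_lt <| ENNReal.rpow_lt_top_of_nonneg ENNReal.toReal_nonneg hf.2.ne).ne

theorem memLp_of_norm_le_one (hf : MemLp f p μ) (hp₀ : p ≠ 0) (hpq : p ≤ q)
    (hbound : ∀ x, ‖f x‖ ≤ 1) : MemLp f q μ := by
  rcases eq_or_ne q ∞ with rfl | hq
  · exact memLp_top_of_bound hf.1 1 (.of_forall hbound)
  have hq₀ : q ≠ 0 := fun h => hp₀ (le_zero_iff.mp (h ▸ hpq))
  have hp : p ≠ ∞ := ne_top_of_le_ne_top hq hpq
  rw [← integrable_norm_rpow_iff hf.1 hq₀ hq]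
  refine (hf.integrable_norm_rpow hp₀ hp).mono'
    (hf.1.norm.aemeasurable.pow_const _).aestronglyMeasurable (.of_forall fun x => ?_)
  rw [norm_of_nonneg (by positivity)]
  exact rpow_le_rpow_of_exponent_ge_of_imp (norm_nonneg _) (hbound x)
    (ENNReal.toReal_mono hq hpq) fun _ h => absurd h (ENNReal.toReal_pos hq₀ hq).ne'

theorem memLp_of_memLp_of_memLp_of_stronglyMeasurable (hf : StronglyMeasurable f)
    (hfp : MemLp f p μ) (hfr : MemLp f r μ) (hp₀ : p ≠ 0) (hp : p ≠ ∞) (hpq : p ≤ q) (hqr : q ≤ r) :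
    MemLp f q μ := by
  have hs : MeasurableSet {x | 1 ≤ ‖f x‖} := measurableSet_le measurable_const hf.norm.measurable
  rw [← Set.indicator_self_add_compl {x | 1 ≤ ‖f x‖} f]
  refine .add ?_ (memLp_of_norm_le_one (hfp.indicator hs.compl) hp₀ hpq fun x => ?_)
  · exact (hfr.indicator hs).mono_exponent_of_measure_support_ne_top
      (fun x hx => Set.indicator_of_notMem hx f) (measure_one_le_norm_ne_top hfp hp₀ hp) hqr
  · by_cases hx : 1 ≤ ‖f x‖
    · simp [hx]
    · simp [hx, (not_le.mp hx).le]

theorem memLp_of_memLp_of_memLp (hfp : MemLp f p μ) (hfr : MemLp f r μ) (hp₀ : p ≠ 0)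
    (hpq : p ≤ q) (hqr : q ≤ r) : MemLp f q μ := by
  rcases eq_or_ne p ∞ with rfl | hp
  · rwa [top_le_iff.mp hpq]
  have hfg := hfp.1.ae_eq_mk
  rw [memLp_congr_ae hfg]
  exact memLp_of_memLp_of_memLp_of_stronglyMeasurable hfp.1.stronglyMeasurable_mk
    (hfp.ae_eq hfg) (hfr.ae_eq hfg) hp₀ hp hpq hqr

end Interpolation

section Cutoff

theorem norm_inv_smul_eq_div {F : Type*} [NormedAddCommGroup F] [NormedSpace ℝ F] {R : ℝ}
    (hR : 0 < R) (x : F) : ‖R⁻¹ • x‖ = ‖x‖ / R := by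
  rw [norm_smul, norm_inv, norm_of_nonneg hR.le, inv_mul_eq_div]

variable {E : Type*} [NormedAddCommGroup E] [NormedSpace ℝ E] [FiniteDimensional ℝ E]
  {R : ℝ} {x : E}

/-- A smooth cutoff at scale `R`: it takes values in `[0, 1]`, equals `1` on the ball of radius `R`
about the origin and `0` outside the ball of radius `2R`. Only `R > 0` is meaningful. -/
def cutoff (R : ℝ) (x : E) : ℝ :=
  (⟨1, 2, one_pos, one_lt_two⟩ : ContDiffBump (0 : E)) (R⁻¹ • x)

theorem contDiff_cutoff (R : ℝ) {n : ℕ∞} : ContDiff ℝ n (cutoff R : E → ℝ) :=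
  (ContDiffBump.contDiff _).comp (contDiff_const_smul R⁻¹)

theorem cutoff_nonneg (R : ℝ) (x : E) : 0 ≤ cutoff R x :=
  ContDiffBump.nonneg _

theorem cutoff_le_one (R : ℝ) (x : E) : cutoff R x ≤ 1 :=
  ContDiffBump.le_one _

theorem norm_cutoff_le_one (R : ℝ) (x : E) : ‖cutoff R x‖ ≤ 1 := by
  rw [norm_of_nonneg (cutoff_nonneg R x)]
  exact cutoff_le_one R x

theorem cutoff_eq_one (hR : 0 < R) (hx : ‖x‖ ≤ R) : cutoff R x = 1 := by
  refine ContDiffBump.one_of_mem_closedBall _ ?_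
  rwa [mem_closedBall_zero_iff, norm_inv_smul_eq_div hR, div_le_one hR]

theorem cutoff_eq_zero (hR : 0 < R) (hx : 2 * R ≤ ‖x‖) : cutoff R x = 0 := by
  refine ContDiffBump.zero_of_le_dist _ ?_
  rwa [dist_zero_right, norm_inv_smul_eq_div hR, le_div_iff₀ hR]

theorem support_cutoff_subset (hR : 0 < R) :
    Function.support (cutoff R : E → ℝ) ⊆ Metric.closedBall 0 (2 * R) := fun x hx => by
  rw [mem_closedBall_zero_iff]
  exact le_of_not_ge fun h => hx (cutoff_eq_zero hR h)

theorem hasCompactSupport_cutoff (hR : 0 < R) : HasCompactSupport (cutoff R : E → ℝ) :=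
  .of_support_subset_isCompact (isCompact_closedBall 0 _) (support_cutoff_subset hR)

theorem eventually_cutoff_eq_one (x : E) : ∀ᶠ R in atTop, cutoff R x = 1 := by
  filter_upwards [eventually_gt_atTop 0, eventually_ge_atTop ‖x‖] with R hR hx
  exact cutoff_eq_one hR hx

theorem fderiv_cutoff_eq_zero_of_norm_lt (hR : 0 < R) (hx : ‖x‖ < R) :
    fderiv ℝ (cutoff R) x = 0 := by
  have heq : (cutoff R : E → ℝ) =ᶠ[𝓝 x] fun _ => 1 := by
    filter_upwards [continuous_norm.continuousAt.eventually_lt continuousAt_const hx] with y hy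
    exact cutoff_eq_one hR hy.le
  rw [heq.fderiv_eq, fderiv_const_apply]

theorem fderiv_cutoff_eq_zero_of_lt_norm (hR : 0 < R) (hx : 2 * R < ‖x‖) :
    fderiv ℝ (cutoff R) x = 0 :=
  fderiv_of_notMem_tsupport ℝ fun h => hx.not_ge <| mem_closedBall_zero_iff.mp <|
    closure_minimal (support_cutoff_subset hR) Metric.isClosed_closedBall h

variable (E) in
theorem exists_norm_fderiv_cutoff_le :
    ∃ C, 0 ≤ C ∧ ∀ R > 0, ∀ x : E, ‖fderiv ℝ (cutoff R) x‖ ≤ C / R := by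
  let χ : ContDiffBump (0 : E) := ⟨1, 2, one_pos, one_lt_two⟩
  obtain ⟨C, hC⟩ : ∃ C, ∀ x, ‖fderiv ℝ χ x‖ ≤ C :=
    (χ.contDiff (n := 1).continuous_fderiv one_ne_zero).bounded_above_of_compact_support
      (χ.hasCompactSupport.fderiv ℝ)
  refine ⟨C, (norm_nonneg _).trans (hC 0), fun R hR x => ?_⟩
  have hscale : fderiv ℝ (cutoff R) x = R⁻¹ • fderiv ℝ χ (R⁻¹ • x) := fderiv_comp_smul R⁻¹
  rw [hscale, norm_smul, norm_inv, norm_of_nonneg hR.le, inv_mul_eq_div]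
  gcongr
  exact hC _

end Cutoff

section Truncation

variable {F : Type*} [NormedAddCommGroup F] [NormedSpace ℝ F] [FiniteDimensional ℝ F] {R : ℝ}

/-- The identity map, smoothly cut off at scale `R`. Composing with it makes a function bounded
while increasing its derivative at most by a factor independent of `R`. -/
def truncate (R : ℝ) (y : F) : F :=
  cutoff R y • y

theorem contDiff_truncate (R : ℝ) {n : ℕ∞} : ContDiff ℝ n (truncate R : F → F) :=
  (contDiff_cutoff R).smul contDiff_id

theorem norm_truncate_le (R : ℝ) (y : F) : ‖truncate R y‖ ≤ ‖y‖ := by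
  rw [truncate, norm_smul]
  exact mul_le_of_le_one_left (norm_nonneg y) (norm_cutoff_le_one R y)

theorem norm_truncate_le_two_mul (hR : 0 < R) (y : F) : ‖truncate R y‖ ≤ 2 * R := by
  rcases le_total (2 * R) ‖y‖ with hy | hy
  · rw [truncate, cutoff_eq_zero hR hy, zero_smul, norm_zero]
    positivity
  · exact (norm_truncate_le R y).trans hy

theorem eventually_truncate_eq_self (y : F) : ∀ᶠ R in atTop, truncate R y = y := by
  filter_upwards [eventually_cutoff_eq_one y] with R hR
  rw [truncate, hR, one_smul]

theorem norm_fderiv_cutoff_mul_norm_le {C : ℝ} (hR : 0 < R) {y : F}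
    (hC : ‖fderiv ℝ (cutoff R) y‖ ≤ C / R) : ‖fderiv ℝ (cutoff R) y‖ * ‖y‖ ≤ 2 * C := by
  rcases le_or_gt ‖y‖ (2 * R) with hy | hy
  · have := (norm_nonneg _).trans hC
    calc ‖fderiv ℝ (cutoff R) y‖ * ‖y‖ ≤ C / R * (2 * R) := by gcongr
      _ = 2 * C := by field_simp
  · rw [fderiv_cutoff_eq_zero_of_lt_norm hR hy, norm_zero] at hC ⊢
    have : 0 ≤ C := by rwa [le_div_iff₀ hR, zero_mul] at hC
    linarith

variable (F) in
theorem exists_norm_fderiv_truncate_le :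
    ∃ C : ℝ≥0, ∀ R > 0, ∀ y : F, ‖fderiv ℝ (truncate R) y‖ ≤ C := by
  obtain ⟨C, hC₀, hC⟩ := exists_norm_fderiv_cutoff_le F
  refine ⟨⟨1 + 2 * C, by positivity⟩, fun R hR y => ?_⟩
  have hderiv := (((contDiff_cutoff (n := 1) R).differentiable one_ne_zero y).hasFDerivAt.smul
    (hasFDerivAt_id y)).fderiv
  have hsplit : fderiv ℝ (truncate R) y =
      cutoff R y • .id ℝ F + (fderiv ℝ (cutoff R) y).smulRight y := hderiv
  calc ‖fderiv ℝ (truncate R) y‖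
      ≤ ‖cutoff R y‖ * ‖ContinuousLinearMap.id ℝ F‖ + ‖fderiv ℝ (cutoff R) y‖ * ‖y‖ := by
        rw [hsplit, ← norm_smul, ← ContinuousLinearMap.norm_smulRight_apply]
        exact norm_add_le _ _
    _ ≤ 1 + 2 * C :=
        add_le_add (mul_le_one₀ (norm_cutoff_le_one R y) (norm_nonneg _)
          ContinuousLinearMap.norm_id_le) (norm_fderiv_cutoff_mul_norm_le hR (hC R hR y))

variable {α : Type*} [MeasurableSpace α] {μ : Measure α}

theorem memLp_truncate_comp {R : ℝ} {q r : ℝ≥0∞} (hR : 0 < R) {u : α → F} (hu : MemLp u q μ)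
    (hq₀ : q ≠ 0) (hqr : q ≤ r) : MemLp (truncate R ∘ u) r μ := by
  have hmeas : AEStronglyMeasurable (truncate R ∘ u) μ :=
    (contDiff_truncate (n := 0) R).continuous.comp_aestronglyMeasurable hu.1
  have hq : MemLp (truncate R ∘ u) q μ := hu.mono hmeas (.of_forall fun x => norm_truncate_le R _)
  have htop : MemLp (truncate R ∘ u) ∞ μ :=
    memLp_top_of_bound hmeas _ (.of_forall fun x => norm_truncate_le_two_mul hR (u x))
  exact memLp_of_memLp_of_memLp hq htop hq₀ hqr le_top

theorem eLpNorm_fderiv_truncate_comp_le [NormedAddCommGroup α] [NormedSpace ℝ α]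
    {u : α → F} {R : ℝ} {C : ℝ≥0} (hu : ContDiff ℝ 1 u)
    (hC : ∀ y : F, ‖fderiv ℝ (truncate R) y‖ ≤ C) (p : ℝ≥0∞) :
    eLpNorm (fderiv ℝ (truncate R ∘ u)) p μ ≤ C * eLpNorm (fderiv ℝ u) p μ := by
  refine eLpNorm_le_nnreal_smul_eLpNorm_of_ae_le_mul (.of_forall fun x => ?_) p
  rw [fderiv_comp x ((contDiff_truncate (n := 1) R).differentiable one_ne_zero _)
    (hu.differentiable one_ne_zero x)]
  exact (ContinuousLinearMap.opNorm_comp_le _ _).trans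
    (mul_le_mul_of_nonneg_right (hC _) (norm_nonneg _))

end Truncation

section Sobolev

variable {E F : Type*} [NormedAddCommGroup E] [NormedSpace ℝ E] [FiniteDimensional ℝ E]
  [NormedAddCommGroup F] [NormedSpace ℝ F] {u : E → F}

theorem norm_fderiv_cutoff_smul_le {R C : ℝ} {x : E} (hu : DifferentiableAt ℝ u x)
    (hC : ‖fderiv ℝ (cutoff R) x‖ ≤ C) :
    ‖fderiv ℝ (fun x => cutoff R x • u x) x‖ ≤ ‖fderiv ℝ u x‖ + C * ‖u x‖ := by
  rw [fderiv_fun_smul ((contDiff_cutoff (n := 1) R).differentiable one_ne_zero x) hu]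
  refine (norm_add_le _ _).trans (add_le_add ?_ ?_)
  · rw [norm_smul]
    exact mul_le_of_le_one_left (norm_nonneg _) (norm_cutoff_le_one R x)
  · rw [ContinuousLinearMap.norm_smulRight_apply]
    gcongr

variable [MeasurableSpace E] [BorelSpace E] {μ : Measure E}

theorem eLpNorm_fderiv_cutoff_smul_le {R C : ℝ} {p : ℝ≥0∞} (hu : ContDiff ℝ 1 u) (hp : 1 ≤ p)
    (hC : ∀ x : E, ‖fderiv ℝ (cutoff R) x‖ ≤ C) :
    eLpNorm (fderiv ℝ (fun x => cutoff R x • u x)) p μ ≤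
      eLpNorm (fderiv ℝ u) p μ + ENNReal.ofReal C * eLpNorm u p μ := by
  have hC₀ : 0 ≤ C := (norm_nonneg _).trans (hC 0)
  calc eLpNorm (fderiv ℝ (fun x => cutoff R x • u x)) p μ
      ≤ eLpNorm ((fun x => ‖fderiv ℝ u x‖) + C • fun x => ‖u x‖) p μ :=
        eLpNorm_mono_real fun x =>
          norm_fderiv_cutoff_smul_le (hu.differentiable one_ne_zero x) (hC x)
    _ ≤ eLpNorm (fun x => ‖fderiv ℝ u x‖) p μ + eLpNorm (C • fun x => ‖u x‖) p μ :=
        eLpNorm_add_le (hu.continuous_fderiv one_ne_zero).norm.aestronglyMeasurable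
          (hu.continuous.norm.const_smul C).aestronglyMeasurable hp
    _ = eLpNorm (fderiv ℝ u) p μ + ENNReal.ofReal C * eLpNorm u p μ := by
        rw [eLpNorm_norm, eLpNorm_const_smul, eLpNorm_norm, enorm_of_nonneg hC₀]

variable [FiniteDimensional ℝ F] [μ.IsAddHaarMeasure] {p p' : ℝ≥0}

theorem eLpNorm_le_eLpNorm_fderiv_of_memLp (hu : ContDiff ℝ 1 u) (hup : MemLp u p μ)
    (hp : 1 ≤ p) (hn : 0 < Module.finrank ℝ E)
    (hp' : (p' : ℝ)⁻¹ = (p : ℝ)⁻¹ - (Module.finrank ℝ E : ℝ)⁻¹) :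
    eLpNorm u p' μ ≤ SNormLESNormFDerivOfEqConst F μ p * eLpNorm (fderiv ℝ u) p μ := by
  obtain ⟨C, hC₀, hC⟩ := exists_norm_fderiv_cutoff_le E
  have hcutoff (R : ℝ) (hR : 0 < R) : eLpNorm (fun x => cutoff R x • u x) p' μ ≤
      SNormLESNormFDerivOfEqConst F μ p *
        (eLpNorm (fderiv ℝ u) p μ + ENNReal.ofReal (C / R) * eLpNorm u p μ) := by
    refine (eLpNorm_le_eLpNorm_fderiv_of_eq μ ((contDiff_cutoff R).smul hu)
      (hasCompactSupport_cutoff hR).smul_right hp hn hp').trans ?_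
    gcongr
    exact eLpNorm_fderiv_cutoff_smul_le hu (by exact_mod_cast hp) (hC R hR)
  have hlim : Tendsto (fun R => SNormLESNormFDerivOfEqConst F μ p *
      (eLpNorm (fderiv ℝ u) p μ + ENNReal.ofReal (C / R) * eLpNorm u p μ)) atTop
      (𝓝 (SNormLESNormFDerivOfEqConst F μ p * (eLpNorm (fderiv ℝ u) p μ + 0 * eLpNorm u p μ))) := by
    have hCR := ENNReal.tendsto_ofReal ((tendsto_const_nhds (x := C)).div_atTop tendsto_id)
    rw [ENNReal.ofReal_zero] at hCR
    exact ENNReal.Tendsto.const_mul (tendsto_const_nhds.add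
      (ENNReal.Tendsto.mul_const hCR (.inr hup.2.ne))) (.inr ENNReal.coe_ne_top)
  rw [zero_mul, add_zero] at hlim
  refine ge_of_tendsto hlim ((eventually_gt_atTop 0).mono fun R hR => ?_)
  refine Lp.eLpNorm_le_of_ae_tendsto (u := atTop) (f := fun R' x => cutoff R' x • u x)
    ((eventually_ge_atTop R).mono fun R' hR' => (hcutoff R' (hR.trans_le hR')).trans ?_)
    (fun R' => ((contDiff_cutoff (n := 0) R').continuous.smul hu.continuous).aestronglyMeasurable)
    (.of_forall fun x => tendsto_nhds_of_eventually_eq ?_)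
  · gcongr
  · filter_upwards [eventually_cutoff_eq_one x] with R' hR'
    rw [hR', one_smul]

theorem memLp_of_memLp_fderiv {q : ℝ≥0∞} (hu : ContDiff ℝ 1 u) (huq : MemLp u q μ) (hq₀ : q ≠ 0)
    (hqp : q ≤ p) (hu' : MemLp (fderiv ℝ u) p μ) (hp : 1 ≤ p) (hn : 0 < Module.finrank ℝ E)
    (hp' : (p' : ℝ)⁻¹ = (p : ℝ)⁻¹ - (Module.finrank ℝ E : ℝ)⁻¹) : MemLp u p' μ := by
  obtain ⟨C, hC⟩ := exists_norm_fderiv_truncate_le F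
  have hbound (R : ℝ) (hR : 0 < R) : eLpNorm (truncate R ∘ u) p' μ ≤
      SNormLESNormFDerivOfEqConst F μ p * (C * eLpNorm (fderiv ℝ u) p μ) := by
    refine (eLpNorm_le_eLpNorm_fderiv_of_memLp ((contDiff_truncate R).comp hu)
      (memLp_truncate_comp hR huq hq₀ hqp) hp hn hp').trans ?_
    gcongr
    exact eLpNorm_fderiv_truncate_comp_le hu (hC R hR) p
  refine ⟨huq.1, lt_of_le_of_lt (Lp.eLpNorm_le_of_ae_tendsto (u := atTop)
    (f := fun R => truncate R ∘ u) ((eventually_gt_atTop 0).mono hbound)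
    (fun R => (contDiff_truncate (n := 0) R).continuous.comp_aestronglyMeasurable huq.1)
    (.of_forall fun x => tendsto_nhds_of_eventually_eq (eventually_truncate_eq_self (u x)))) ?_⟩
  exact ENNReal.mul_lt_top ENNReal.coe_lt_top (ENNReal.mul_lt_top ENNReal.coe_lt_top hu'.2)

end Sobolev

section CubicIntegrability

theorem memLp_of_memLp_norm_sq {α F : Type*} [MeasurableSpace α] {μ : Measure α}
    [NormedAddCommGroup F] {f : α → F} {p : ℝ≥0∞} (hf : AEStronglyMeasurable f μ)
    (hf2 : MemLp (fun x => ‖f x‖ ^ 2) p μ) : MemLp f (2 * p) μ := by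
  rw [← memLp_norm_rpow_iff hf two_ne_zero ENNReal.ofNat_ne_top,
    mul_comm, ENNReal.mul_div_cancel_right two_ne_zero ENNReal.ofNat_ne_top]
  simpa using hf2

theorem holderConjugate_natCast_ofReal {n : ℕ} (hn : 1 < n) :
    ENNReal.HolderConjugate n (ENNReal.ofReal (n / (n - 1))) := by
  simpa [conjExponent] using
    (Real.HolderConjugate.conjExponent (p := n) (mod_cast hn)).ennrealOfReal

theorem three_le_ofReal_div {n : ℕ} (hn : 1 < n) : 3 ≤ ENNReal.ofReal (3 * n / (n - 1)) := by
  have hn₀ : 0 < (n : ℝ) - 1 := sub_pos.2 (mod_cast hn)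
  rw [ENNReal.le_ofReal_iff_toReal_le (by simp) (by positivity), ENNReal.toReal_ofNat,
    le_div_iff₀ hn₀]
  linarith

theorem le_two_of_holderConjugate {p q : ℝ≥0∞} [hpq : ENNReal.HolderConjugate p q] (hp : 2 ≤ p) :
    q ≤ 2 := by
  have hp1 : 1 ≤ p - 1 :=
    ENNReal.le_sub_of_add_le_right ENNReal.one_ne_top (by rwa [one_add_one_eq_two])
  rw [hpq.conj_eq, ← one_add_one_eq_two]
  gcongr
  exact ENNReal.inv_le_one.mpr hp1

variable {E F : Type*} [NormedAddCommGroup E] [NormedSpace ℝ E]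
  [NormedAddCommGroup F] [InnerProductSpace ℝ F] {u : E → F}

theorem norm_fderiv_norm_sq_le {x : E} (hu : DifferentiableAt ℝ u x) :
    ‖fderiv ℝ (fun y => ‖u y‖ ^ 2) x‖ ≤ 2 * (‖u x‖ * ‖fderiv ℝ u x‖) := by
  rw [hu.hasFDerivAt.norm_sq.fderiv]
  calc ‖2 • (innerSL ℝ (u x)).comp (fderiv ℝ u x)‖
      ≤ (2 : ℕ) * ‖(innerSL ℝ (u x)).comp (fderiv ℝ u x)‖ := norm_nsmul_le
    _ ≤ 2 * (‖innerSL ℝ (u x)‖ * ‖fderiv ℝ u x‖) := by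
        rw [Nat.cast_ofNat]
        gcongr
        exact ContinuousLinearMap.opNorm_comp_le _ _
    _ = 2 * (‖u x‖ * ‖fderiv ℝ u x‖) := by rw [innerSL_apply_norm]

variable [MeasurableSpace E] [BorelSpace E] [FiniteDimensional ℝ E] {μ : Measure E}

theorem memLp_fderiv_norm_sq (hu : ContDiff ℝ 1 u) (hu2 : MemLp u 2 μ)
    (hu' : MemLp (fderiv ℝ u) 2 μ) : MemLp (fderiv ℝ fun x => ‖u x‖ ^ 2) 1 μ := by
  have hmul : MemLp (fun x => ‖u x‖ * ‖fderiv ℝ u x‖) 1 μ := hu'.norm.mul hu2.norm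
  refine hmul.of_le_mul (c := 2)
    ((hu.norm_sq ℝ).continuous_fderiv one_ne_zero).aestronglyMeasurable (.of_forall fun x => ?_)
  rw [norm_of_nonneg (by positivity)]
  exact norm_fderiv_norm_sq_le (hu.differentiable one_ne_zero x)

variable [FiniteDimensional ℝ F] [μ.IsAddHaarMeasure]

theorem memLp_two_mul_of_memLp_two {p : ℝ≥0} (hu : ContDiff ℝ 1 u) (hu2 : MemLp u 2 μ)
    (hu' : MemLp (fderiv ℝ u) 2 μ) (hn : 0 < Module.finrank ℝ E)
    (hp : (p : ℝ)⁻¹ = 1 - (Module.finrank ℝ E : ℝ)⁻¹) : MemLp u (2 * p) μ := by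
  have hsq : MemLp (fun x => ‖u x‖ ^ 2) 1 μ := memLp_one_iff_integrable.mpr <|
    (memLp_two_iff_integrable_sq_norm hu.continuous.aestronglyMeasurable).mp hu2
  exact memLp_of_memLp_norm_sq hu2.1 <|
    memLp_of_memLp_fderiv (p := 1) (hu.norm_sq ℝ) hsq one_ne_zero le_rfl
      (memLp_fderiv_norm_sq hu hu2 hu') le_rfl hn (by simpa using hp)

theorem memLp_three_of_finrank_eq_two (hu : ContDiff ℝ 1 u) (hu2 : MemLp u 2 μ)
    (hu' : MemLp (fderiv ℝ u) 2 μ) (hn : Module.finrank ℝ E = 2) : MemLp u 3 μ := by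
  have hu4 : MemLp u (2 * (2 : ℝ≥0)) μ :=
    memLp_two_mul_of_memLp_two hu hu2 hu' (by omega) (by rw [hn]; norm_num)
  exact memLp_of_memLp_of_memLp hu2 hu4 two_ne_zero (by norm_num) (by norm_num)

theorem memLp_three_of_three_le_finrank {q : ℝ≥0∞} (hu : ContDiff ℝ 1 u) (huq : MemLp u q μ)
    (hq₀ : q ≠ 0) (hq : q ≤ 2) (hu' : MemLp (fderiv ℝ u) 2 μ) (hn : 3 ≤ Module.finrank ℝ E)
    (hn' : Module.finrank ℝ E ≤ 6) : MemLp u 3 μ := by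
  set n : ℝ := (Module.finrank ℝ E : ℝ) with hn_def
  have h3 : 3 ≤ n := by rw [hn_def]; exact_mod_cast hn
  have h6 : n ≤ 6 := by rw [hn_def]; exact_mod_cast hn'
  let p : ℝ≥0 := ⟨2 * n / (n - 2), div_nonneg (by linarith) (by linarith)⟩
  have hup : MemLp u p μ := by
    refine memLp_of_memLp_fderiv (p := 2) hu huq hq₀ hq hu' one_le_two (by omega) ?_
    change (2 * n / (n - 2))⁻¹ = 2⁻¹ - n⁻¹
    have : n - 2 ≠ 0 := by linarith
    field_simp
  have h3p : (3 : ℝ≥0) ≤ p := by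
    change 3 ≤ 2 * n / (n - 2)
    rw [le_div_iff₀ (by linarith)]
    linarith
  exact memLp_of_memLp_of_memLp huq hup hq₀ (hq.trans (by norm_num)) (by exact_mod_cast h3p)

theorem memLp_three_of_holderConjugate_finrank {q : ℝ≥0∞}
    [hq : ENNReal.HolderConjugate (Module.finrank ℝ E) q] (hu : ContDiff ℝ 1 u)
    (huq : MemLp u q μ) (hu' : MemLp (fderiv ℝ u) 2 μ) (hn : 2 ≤ Module.finrank ℝ E)
    (hn' : Module.finrank ℝ E ≤ 6) : MemLp u 3 μ := by
  rcases hn.eq_or_lt with h2 | h3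
  · have hconj : ENNReal.HolderConjugate 2 q := by rwa [← h2] at hq
    have hq₂ : q = 2 := ENNReal.HolderConjugate.unique 2 q 2
    exact memLp_three_of_finrank_eq_two hu (hq₂ ▸ huq) hu' h2.symm
  · exact memLp_three_of_three_le_finrank hu huq hq.symm.ne_zero
      (le_two_of_holderConjugate (p := Module.finrank ℝ E) (by exact_mod_cast hn)) hu' h3 hn'

end CubicIntegrability

section CutoffLimits

theorem enorm_integral_clm_apply_le {α E F : Type*} [MeasurableSpace α] {μ : Measure α}
    [NormedAddCommGroup E] [NormedSpace ℝ E] [NormedAddCommGroup F] [NormedSpace ℝ F]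
    {L : α → E →L[ℝ] F} {g : α → E} {p q : ℝ≥0∞} [ENNReal.HolderConjugate p q]
    (hL : AEStronglyMeasurable L μ) (hg : AEStronglyMeasurable g μ) :
    ‖∫ x, L x (g x) ∂μ‖ₑ ≤ eLpNorm L p μ * eLpNorm g q μ := by
  refine (enorm_integral_le_lintegral_enorm _).trans ?_
  rw [← eLpNorm_one_eq_lintegral_enorm]
  simpa using eLpNorm_le_eLpNorm_mul_eLpNorm_of_nnnorm (r := 1) hL hg (fun l y => l y) 1
    (.of_forall fun x => by simpa using (L x).le_opNNNorm (g x))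

variable {E : Type*} [NormedAddCommGroup E] [NormedSpace ℝ E] [FiniteDimensional ℝ E]

theorem norm_fderiv_cutoff_le_indicator {R C : ℝ} (hR : 0 < R)
    (hC : ∀ x : E, ‖fderiv ℝ (cutoff R) x‖ ≤ C) (x : E) :
    ‖fderiv ℝ (cutoff R) x‖ ≤ (Metric.closedBall 0 (2 * R)).indicator (fun _ => C) x := by
  by_cases hx : x ∈ Metric.closedBall 0 (2 * R)
  · rw [Set.indicator_of_mem hx]
    exact hC x
  · rw [Set.indicator_of_notMem hx]
    rw [mem_closedBall_zero_iff, not_le] at hx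
    rw [fderiv_cutoff_eq_zero_of_lt_norm hR hx, norm_zero]

theorem eventually_fderiv_cutoff_apply_eq_zero {g : E → E} (hg : HasCompactSupport g) :
    ∀ᶠ R in atTop, ∀ x, fderiv ℝ (cutoff R) x (g x) = 0 := by
  obtain ⟨r, hr⟩ := hg.isCompact.isBounded.exists_norm_le
  filter_upwards [eventually_gt_atTop 0, eventually_gt_atTop r] with R hR hrR x
  by_cases hx : x ∈ tsupport g
  · rw [fderiv_cutoff_eq_zero_of_norm_lt hR ((hr x hx).trans_lt hrR), zero_apply]
  · rw [image_eq_zero_of_notMem_tsupport hx, map_zero]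

variable [MeasurableSpace E] [BorelSpace E]

theorem tendsto_integral_cutoff_mul {μ : Measure E} {f : E → ℝ} (hf : Integrable f μ) :
    Tendsto (fun R => ∫ x, cutoff R x * f x ∂μ) atTop (𝓝 (∫ x, f x ∂μ)) := by
  refine tendsto_integral_filter_of_dominated_convergence (fun x => ‖f x‖)
    (.of_forall fun R => (contDiff_cutoff (n := 0) R).continuous.aestronglyMeasurable.mul hf.1)
    (.of_forall fun R => .of_forall fun x => ?_) hf.norm
    (.of_forall fun x => tendsto_nhds_of_eventually_eq ?_)
  · rw [norm_mul]
    exact mul_le_of_le_one_left (norm_nonneg _) (norm_cutoff_le_one R x)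
  · filter_upwards [eventually_cutoff_eq_one x] with R hR
    rw [hR, one_mul]

variable (μ : Measure E) [μ.IsAddHaarMeasure] {p q : ℝ≥0∞}

theorem measure_closedBall_rpow_le {r : ℝ} (hr : 1 ≤ r) (hp : Module.finrank ℝ E ≤ p) :
    μ (Metric.closedBall 0 r) ^ (1 / p.toReal) ≤
      ENNReal.ofReal r * μ (Metric.ball 0 1) ^ (1 / p.toReal) := by
  have hexp : Module.finrank ℝ E * (1 / p.toReal) ≤ 1 := by
    rcases eq_or_ne p ∞ with rfl | hp_top
    · simp
    rw [mul_one_div]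
    exact div_le_one_of_le₀ (by simpa using ENNReal.toReal_mono hp_top hp) ENNReal.toReal_nonneg
  rw [Measure.addHaar_closedBall μ 0 (by linarith), ENNReal.mul_rpow_of_nonneg _ _ (by positivity),
    ENNReal.ofReal_rpow_of_nonneg (by positivity) (by positivity), ← rpow_natCast,
    ← rpow_mul (by linarith)]
  gcongr
  simpa using rpow_le_rpow_of_exponent_le hr hexp

theorem exists_eLpNorm_fderiv_cutoff_le (hp : Module.finrank ℝ E ≤ p) :
    ∃ K : ℝ≥0, ∀ R ≥ 1, eLpNorm (fderiv ℝ (cutoff R : E → ℝ)) p μ ≤ K := by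
  obtain ⟨C, hC₀, hC⟩ := exists_norm_fderiv_cutoff_le E
  set m := μ (Metric.ball (0 : E) 1) ^ (1 / p.toReal)
  have hm_top : m ≠ ∞ := ENNReal.rpow_ne_top_of_nonneg (by positivity) measure_ball_lt_top.ne
  have hK : ENNReal.ofReal (2 * C) * m ≠ ∞ := ENNReal.mul_ne_top ENNReal.ofReal_ne_top hm_top
  refine ⟨(ENNReal.ofReal (2 * C) * m).toNNReal, fun R hR => ?_⟩
  have hR₀ : 0 < R := by linarith
  calc eLpNorm (fderiv ℝ (cutoff R : E → ℝ)) p μ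
      ≤ eLpNorm ((Metric.closedBall (0 : E) (2 * R)).indicator fun _ => C / R) p μ :=
        eLpNorm_mono_real (norm_fderiv_cutoff_le_indicator hR₀ (hC R hR₀))
    _ ≤ ENNReal.ofReal (C / R) * μ (Metric.closedBall 0 (2 * R)) ^ (1 / p.toReal) := by
        rw [← enorm_of_nonneg (by positivity)]
        exact eLpNorm_indicator_const_le _ _
    _ ≤ ENNReal.ofReal (C / R) * (ENNReal.ofReal (2 * R) * m) := by
        gcongr
        exact measure_closedBall_rpow_le μ (by linarith) hp
    _ = (ENNReal.ofReal (2 * C) * m).toNNReal := by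
        rw [ENNReal.coe_toNNReal hK, ← mul_assoc, ← ENNReal.ofReal_mul (by positivity)]
        congr 2
        field_simp

theorem tendsto_integral_fderiv_cutoff_apply [ENNReal.HolderConjugate p q]
    (hp : Module.finrank ℝ E ≤ p) (hq : q ≠ ∞) {g : E → E} (hg : MemLp g q μ) :
    Tendsto (fun R => ∫ x, fderiv ℝ (cutoff R) x (g x) ∂μ) atTop (𝓝 0) := by
  obtain ⟨K, hK⟩ := exists_eLpNorm_fderiv_cutoff_le μ hp
  rw [tendsto_zero_iff_enorm_tendsto_zero, ENNReal.tendsto_nhds_zero]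
  intro ε hε
  obtain ⟨h, hh, hgh, -, hh_mem⟩ := hg.exists_hasCompactSupport_eLpNorm_sub_le hq
    (ε := ε / K) (ENNReal.div_ne_zero.mpr ⟨hε.ne', ENNReal.coe_ne_top⟩)
  filter_upwards [eventually_fderiv_cutoff_apply_eq_zero hh, eventually_ge_atTop 1] with R hR hR1
  have hL : AEStronglyMeasurable (fderiv ℝ (cutoff R : E → ℝ)) μ :=
    ((contDiff_cutoff (n := 1) R).continuous_fderiv one_ne_zero).aestronglyMeasurable
  calc ‖∫ x, fderiv ℝ (cutoff R) x (g x) ∂μ‖ₑ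
      = ‖∫ x, fderiv ℝ (cutoff R) x ((g - h) x) ∂μ‖ₑ := by
        simp only [Pi.sub_apply, map_sub, hR, sub_zero]
    _ ≤ eLpNorm (fderiv ℝ (cutoff R : E → ℝ)) p μ * eLpNorm (g - h) q μ :=
        enorm_integral_clm_apply_le hL (hg.1.sub hh_mem.1)
    _ ≤ K * (ε / K) := mul_le_mul' (hK R hR1) hgh
    _ ≤ ε := ENNReal.mul_div_le

end CutoffLimits

section VectorCalculus

variable {N : ℕ} {f : EuclideanSpace ℝ (Fin N) → ℝ}
  {u w : EuclideanSpace ℝ (Fin N) → EuclideanSpace ℝ (Fin N)} {x : EuclideanSpace ℝ (Fin N)}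

theorem fderiv_apply_eq_sum_pd (f : EuclideanSpace ℝ (Fin N) → ℝ)
    (x y : EuclideanSpace ℝ (Fin N)) : fderiv ℝ f x y = ∑ j, y j * pd N f j x := by
  conv_lhs => rw [← (EuclideanSpace.basisFun (Fin N) ℝ).sum_repr y]
  simp [pd]

theorem fderiv_coord_apply {u' : EuclideanSpace ℝ (Fin N) →L[ℝ] EuclideanSpace ℝ (Fin N)}
    (hu : HasFDerivAt u u' x) (i : Fin N) (y : EuclideanSpace ℝ (Fin N)) :
    fderiv ℝ (fun z => u z i) x y = u' y i :=
  DFunLike.congr_fun ((EuclideanSpace.proj (𝕜 := ℝ) i).hasFDerivAt.comp x hu).fderiv y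

theorem divV_eq {u' : EuclideanSpace ℝ (Fin N) →L[ℝ] EuclideanSpace ℝ (Fin N)}
    (hu : HasFDerivAt u u' x) : divV N u x = ∑ j, u' (EuclideanSpace.single j 1) j :=
  Finset.sum_congr rfl fun j _ => fderiv_coord_apply hu j _

theorem divV_add (hu : DifferentiableAt ℝ u x) (hw : DifferentiableAt ℝ w x) :
    divV N (fun y => u y + w y) x = divV N u x + divV N w x := by
  rw [divV_eq (hu.hasFDerivAt.fun_add hw.hasFDerivAt), divV_eq hu.hasFDerivAt,
    divV_eq hw.hasFDerivAt, ← Finset.sum_add_distrib]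
  rfl

theorem divV_sub (hu : DifferentiableAt ℝ u x) (hw : DifferentiableAt ℝ w x) :
    divV N (fun y => u y - w y) x = divV N u x - divV N w x := by
  rw [divV_eq (hu.hasFDerivAt.fun_sub hw.hasFDerivAt), divV_eq hu.hasFDerivAt,
    divV_eq hw.hasFDerivAt, ← Finset.sum_sub_distrib]
  rfl

theorem divV_smul (hf : DifferentiableAt ℝ f x) (hu : DifferentiableAt ℝ u x) :
    divV N (fun y => f y • u y) x = f x * divV N u x + fderiv ℝ f x (u x) := by
  rw [divV_eq (hf.hasFDerivAt.fun_smul hu.hasFDerivAt), divV_eq hu.hasFDerivAt,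
    fderiv_apply_eq_sum_pd, Finset.mul_sum, ← Finset.sum_add_distrib]
  exact Finset.sum_congr rfl fun j _ => by simp [pd, mul_comm]

theorem divV_const_smul (c : ℝ) (hu : DifferentiableAt ℝ u x) :
    divV N (fun y => c • u y) x = c * divV N u x := by
  rw [divV_smul (differentiableAt_const c) hu, fderiv_const_apply, zero_apply, add_zero]

theorem gradient_apply_eq_pd (f : EuclideanSpace ℝ (Fin N) → ℝ) (x : EuclideanSpace ℝ (Fin N))
    (j : Fin N) : gradient f x j = pd N f j x := by
  rw [pd, ← inner_gradient_left, EuclideanSpace.inner_single_right]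
  simp

theorem divV_gradient (f : EuclideanSpace ℝ (Fin N) → ℝ) (x : EuclideanSpace ℝ (Fin N)) :
    divV N (gradient f) x = lap N f x :=
  Finset.sum_congr rfl fun j _ => by simp only [gradient_apply_eq_pd f]

end VectorCalculus

section Gradients

variable {N : ℕ} {f : EuclideanSpace ℝ (Fin N) → ℝ}
  {u w : EuclideanSpace ℝ (Fin N) → EuclideanSpace ℝ (Fin N)}

theorem contDiff_coord {n : WithTop ℕ∞} (hu : ContDiff ℝ n u) (i : Fin N) :
    ContDiff ℝ n fun x => u x i :=
  (EuclideanSpace.proj (𝕜 := ℝ) i).contDiff.comp hu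

theorem contDiff_pd {n : WithTop ℕ∞} (hf : ContDiff ℝ (n + 1) f) (j : Fin N) :
    ContDiff ℝ n (pd N f j) :=
  hf.fderiv_right le_rfl |>.clm_apply contDiff_const

theorem contDiff_divV {n : WithTop ℕ∞} (hu : ContDiff ℝ (n + 1) u) : ContDiff ℝ n (divV N u) :=
  .sum fun j _ => contDiff_pd (contDiff_coord hu j) j

theorem contDiff_gradient {n : WithTop ℕ∞} (hf : ContDiff ℝ (n + 1) f) :
    ContDiff ℝ n (gradient f) :=
  (InnerProductSpace.toDual ℝ _).symm.toContinuousLinearEquiv.contDiff.comp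
    (hf.fderiv_right le_rfl)

theorem norm_gradient {E : Type*} [NormedAddCommGroup E] [InnerProductSpace ℝ E] [CompleteSpace E]
    (f : E → ℝ) (x : E) : ‖gradient f x‖ = ‖fderiv ℝ f x‖ :=
  (InnerProductSpace.toDual ℝ E).symm.norm_map _

/-- The squared Frobenius norm `|∇u|²` of the gradient matrix of a vector field. -/
def gradNormSq (u : EuclideanSpace ℝ (Fin N) → EuclideanSpace ℝ (Fin N))
    (x : EuclideanSpace ℝ (Fin N)) : ℝ :=
  ∑ i, ∑ j, pd N (fun y => u y i) j x ^ 2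

theorem gradNormSq_nonneg (u : EuclideanSpace ℝ (Fin N) → EuclideanSpace ℝ (Fin N))
    (x : EuclideanSpace ℝ (Fin N)) : 0 ≤ gradNormSq u x :=
  Finset.sum_nonneg fun _ _ => Finset.sum_nonneg fun _ _ => sq_nonneg _

theorem continuous_gradNormSq (hu : ContDiff ℝ 1 u) : Continuous (gradNormSq u) :=
  continuous_finsetSum _ fun i _ => continuous_finsetSum _ fun j _ =>
    (contDiff_pd (n := 0) (contDiff_coord hu i) j).continuous.pow 2

theorem norm_fderiv_sq_le_gradNormSq {x : EuclideanSpace ℝ (Fin N)}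
    (hu : DifferentiableAt ℝ u x) : ‖fderiv ℝ u x‖ ^ 2 ≤ gradNormSq u x := by
  have hnonneg := gradNormSq_nonneg u x
  rw [← Real.le_sqrt (norm_nonneg _) hnonneg]
  refine ContinuousLinearMap.opNorm_le_bound _ (Real.sqrt_nonneg _) fun y => ?_
  refine abs_le_of_sq_le_sq' ?_ (by positivity) |>.2
  rw [mul_pow, Real.sq_sqrt hnonneg, EuclideanSpace.real_norm_sq_eq, EuclideanSpace.real_norm_sq_eq,
    gradNormSq, Finset.sum_mul]
  refine Finset.sum_le_sum fun i _ => ?_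
  have hi : fderiv ℝ u x y i = ∑ j, pd N (fun z => u z i) j x * y j := by
    simp only [← fderiv_coord_apply hu.hasFDerivAt, fderiv_apply_eq_sum_pd, mul_comm]
  rw [hi]
  exact Finset.sum_mul_sq_le_sq_mul_sq _ _ _

theorem divV_sq_le_mul_gradNormSq (u : EuclideanSpace ℝ (Fin N) → EuclideanSpace ℝ (Fin N))
    (x : EuclideanSpace ℝ (Fin N)) : divV N u x ^ 2 ≤ N * gradNormSq u x := by
  calc divV N u x ^ 2 ≤ N * ∑ j, pd N (fun y => u y j) j x ^ 2 := by
        simpa [divV] using sq_sum_le_card_mul_sum_sq (s := Finset.univ)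
          (f := fun j => pd N (fun y => u y j) j x)
    _ ≤ N * gradNormSq u x := by
        gcongr
        exact Finset.sum_le_sum fun i _ => Finset.single_le_sum
          (f := fun j => pd N (fun y => u y i) j x ^ 2) (fun _ _ => sq_nonneg _) (Finset.mem_univ i)

theorem memLp_two_fderiv (hu : ContDiff ℝ 1 u) (hgrad : Integrable (gradNormSq u)) :
    MemLp (fderiv ℝ u) 2 := by
  have hmeas := (hu.continuous_fderiv one_ne_zero).aestronglyMeasurable (μ := volume)
  rw [memLp_two_iff_integrable_sq_norm hmeas]
  refine hgrad.mono' (hmeas.norm.pow 2) (.of_forall fun x => ?_)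
  rw [norm_of_nonneg (by positivity)]
  exact norm_fderiv_sq_le_gradNormSq (hu.differentiable one_ne_zero x)

theorem memLp_two_divV (hu : ContDiff ℝ 1 u) (hgrad : Integrable (gradNormSq u)) :
    MemLp (divV N u) 2 := by
  have hmeas := (contDiff_divV (n := 0) hu).continuous.aestronglyMeasurable (μ := volume)
  rw [memLp_two_iff_integrable_sq hmeas]
  refine (hgrad.const_mul N).mono' (hmeas.pow 2) (.of_forall fun x => ?_)
  rw [norm_of_nonneg (by positivity)]
  exact divV_sq_le_mul_gradNormSq u x

end Gradients

section DivergenceTheorem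

variable {N : ℕ} {u w : EuclideanSpace ℝ (Fin N) → EuclideanSpace ℝ (Fin N)}

theorem integrable_mul_divV {σ : EuclideanSpace ℝ (Fin N) → ℝ} (hσ : Continuous σ)
    (hσ_supp : HasCompactSupport σ) (hu : ContDiff ℝ 1 u) :
    Integrable fun x => σ x * divV N u x :=
  (hσ.mul (contDiff_divV (n := 0) hu).continuous).integrable_of_hasCompactSupport hσ_supp.mul_right

theorem integral_mul_divV_eq_neg {σ : EuclideanSpace ℝ (Fin N) → ℝ} (hσ : ContDiff ℝ 1 σ)
    (hσ_supp : HasCompactSupport σ) (hu : ContDiff ℝ 1 u) :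
    ∫ x, σ x * divV N u x = -∫ x, fderiv ℝ σ x (u x) := by
  have hui (j : Fin N) := contDiff_coord hu j
  have hleft (j : Fin N) : Integrable fun x => σ x * pd N (fun y => u y j) j x :=
    (hσ.continuous.mul (contDiff_pd (n := 0) (hui j) j).continuous).integrable_of_hasCompactSupport
      hσ_supp.mul_right
  have hright (j : Fin N) : Integrable fun x => pd N σ j x * u x j :=
    ((contDiff_pd (n := 0) hσ j).continuous.mul (hui j).continuous).integrable_of_hasCompactSupport
      (hσ_supp.fderiv_apply ℝ _).mul_right
  have hparts (j : Fin N) :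
      ∫ x, σ x * pd N (fun y => u y j) j x = -∫ x, pd N σ j x * u x j :=
    integral_mul_fderiv_eq_neg_fderiv_mul_of_integrable (hright j) (hleft j)
      ((hσ.continuous.mul (hui j).continuous).integrable_of_hasCompactSupport hσ_supp.mul_right)
      (fun x _ => hσ.differentiable one_ne_zero x) (fun x _ => (hui j).differentiable one_ne_zero x)
  simp only [divV, Finset.mul_sum, fderiv_apply_eq_sum_pd, mul_comm (u _ _)]
  rw [integral_finsetSum _ fun j _ => hleft j, integral_finsetSum _ fun j _ => hright j,
    ← Finset.sum_neg_distrib]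
  exact Finset.sum_congr rfl fun j _ => hparts j

theorem tendsto_integral_cutoff_mul_divV {p q : ℝ≥0∞} [ENNReal.HolderConjugate p q] (hp : N ≤ p)
    (hq : q ≠ ∞) (hu : ContDiff ℝ 1 u) (huq : MemLp u q) :
    Tendsto (fun R => ∫ x, cutoff R x * divV N u x) atTop (𝓝 0) := by
  have hlim := (tendsto_integral_fderiv_cutoff_apply volume (p := p) (by simpa using hp) hq huq).neg
  rw [neg_zero] at hlim
  refine hlim.congr' ((eventually_gt_atTop 0).mono fun R hR => ?_)
  exact (integral_mul_divV_eq_neg (contDiff_cutoff R) (hasCompactSupport_cutoff hR) hu).symm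

theorem integral_divV_sub_divV_eq_zero {q : ℝ≥0∞} [ENNReal.HolderConjugate N q] (hq : q ≠ ∞)
    (hu : ContDiff ℝ 1 u) (hw : ContDiff ℝ 1 w) (hu1 : MemLp u 1) (hwq : MemLp w q)
    (hdiv_int : Integrable fun x => divV N u x - divV N w x) :
    ∫ x, (divV N u x - divV N w x) = 0 := by
  have htop := ENNReal.HolderConjugate.top_one
  have hzero := (tendsto_integral_cutoff_mul_divV (p := ∞) le_top ENNReal.one_ne_top hu hu1).sub
    (tendsto_integral_cutoff_mul_divV (p := N) le_rfl hq hw hwq)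
  rw [sub_zero] at hzero
  refine tendsto_nhds_unique (tendsto_integral_cutoff_mul hdiv_int) (hzero.congr' ?_)
  filter_upwards [eventually_gt_atTop 0] with R hR
  have hcont := (contDiff_cutoff (E := EuclideanSpace ℝ (Fin N)) (n := 0) R).continuous
  rw [← integral_sub (integrable_mul_divV hcont (hasCompactSupport_cutoff hR) hu)
    (integrable_mul_divV hcont (hasCompactSupport_cutoff hR) hw)]
  simp only [mul_sub]

end DivergenceTheorem

section EnergyIdentity

variable {N : ℕ} {ρ : EuclideanSpace ℝ (Fin N) → ℝ}
  {v w : EuclideanSpace ℝ (Fin N) → EuclideanSpace ℝ (Fin N)} {x : EuclideanSpace ℝ (Fin N)}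

theorem fderiv_norm_sq_apply_eq_sum (hv : DifferentiableAt ℝ v x)
    (y : EuclideanSpace ℝ (Fin N)) :
    fderiv ℝ (fun z => ‖v z‖ ^ 2) x y = 2 * ∑ i, v x i * fderiv ℝ (fun z => v z i) x y := by
  rw [hv.hasFDerivAt.norm_sq.fderiv]
  simp [PiLp.inner_apply, fderiv_coord_apply hv.hasFDerivAt, mul_comm]

theorem divV_norm_sq_smul (hv : DifferentiableAt ℝ v x) (hw : DifferentiableAt ℝ w x)
    (hdiv : divV N w x = 0) :
    divV N (fun y => ‖v y‖ ^ 2 • w y) x = 2 * ∑ i, v x i * divV N (fun y => v y i • w y) x := by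
  have hcoord (i : Fin N) :
      divV N (fun y => v y i • w y) x = fderiv ℝ (fun y => v y i) x (w x) := by
    have hvi : DifferentiableAt ℝ (fun y => v y i) x :=
      (EuclideanSpace.proj (𝕜 := ℝ) i).differentiableAt.comp x hv
    rw [divV_smul hvi hw, hdiv, mul_zero, zero_add]
  rw [divV_smul (hv.norm_sq ℝ) hw, hdiv, mul_zero, zero_add, fderiv_norm_sq_apply_eq_sum hv]
  simp only [hcoord]

theorem pd_pd_norm_sq (hv : ContDiff ℝ 2 v) (j : Fin N) (x : EuclideanSpace ℝ (Fin N)) :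
    pd N (pd N (fun y => ‖v y‖ ^ 2) j) j x =
      2 * ∑ i, (v x i * pd N (pd N (fun y => v y i) j) j x + pd N (fun y => v y i) j x ^ 2) := by
  have hpd : pd N (fun y => ‖v y‖ ^ 2) j = fun y => 2 * ∑ i, v y i * pd N (fun z => v z i) j y :=
    funext fun y => fderiv_norm_sq_apply_eq_sum (hv.differentiable two_ne_zero y) _
  have hvi (i : Fin N) := (contDiff_coord hv i).differentiable two_ne_zero x
  have hpdi (i : Fin N) : DifferentiableAt ℝ (pd N (fun y => v y i) j) x :=
    (contDiff_pd (n := 1) (contDiff_coord hv i) j).differentiable one_ne_zero x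
  have hderiv := (HasFDerivAt.fun_sum fun i (_ : i ∈ Finset.univ) =>
    (hvi i).hasFDerivAt.fun_mul (hpdi i).hasFDerivAt).const_mul 2
  rw [hpd, pd, hderiv.fderiv]
  simp [pd, sq]

theorem lap_norm_sq (hv : ContDiff ℝ 2 v) (x : EuclideanSpace ℝ (Fin N)) :
    lap N (fun y => ‖v y‖ ^ 2) x =
      2 * (∑ i, v x i * lap N (fun y => v y i) x + gradNormSq v x) := by
  simp only [lap, gradNormSq, pd_pd_norm_sq hv, Finset.mul_sum, ← Finset.sum_add_distrib]
  exact Finset.sum_comm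

theorem divV_divV_smul (hv : ContDiff ℝ 2 v) (x : EuclideanSpace ℝ (Fin N)) :
    divV N (fun y => divV N v y • v y) x =
      ∑ i, v x i * pd N (divV N v) i x + divV N v x ^ 2 := by
  rw [divV_smul ((contDiff_divV (n := 1) hv).differentiable one_ne_zero x)
    (hv.differentiable two_ne_zero x), fderiv_apply_eq_sum_pd]
  ring

/-- The flux `γ / (γ - 1) p v` of the enthalpy `γ / (γ - 1) p / ρ`, where `p = a ρ ^ γ`. -/
def enthalpyFlux (a γ : ℝ) (ρ : EuclideanSpace ℝ (Fin N) → ℝ)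
    (v : EuclideanSpace ℝ (Fin N) → EuclideanSpace ℝ (Fin N)) (x : EuclideanSpace ℝ (Fin N)) :
    EuclideanSpace ℝ (Fin N) :=
  (γ / (γ - 1)) • (a * ρ x ^ γ) • v x

theorem divV_enthalpyFlux {a γ : ℝ} (hγ : 1 < γ) (hρ : DifferentiableAt ℝ ρ x)
    (hv : DifferentiableAt ℝ v x) (hρ₀ : 0 ≤ ρ x) (hdiv : divV N (fun y => ρ y • v y) x = 0) :
    divV N (enthalpyFlux a γ ρ v) x = ∑ i, v x i * pd N (fun y => a * ρ y ^ γ) i x := by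
  have hp := (hρ.hasFDerivAt.rpow_const (p := γ) (.inr hγ.le)).const_mul a
  have hpow : ρ x ^ γ = ρ x ^ (γ - 1) * ρ x := by
    rw [← rpow_add_one' hρ₀ (by linarith), sub_add_cancel]
  have hγ₁ : γ - 1 ≠ 0 := by linarith
  rw [divV_smul hρ hv] at hdiv
  unfold enthalpyFlux
  rw [divV_const_smul _ (hp.differentiableAt.fun_smul hv), divV_smul hp.differentiableAt hv,
    ← fderiv_apply_eq_sum_pd, hp.fderiv, hpow]
  simp only [smul_apply, smul_eq_mul]
  field_simp
  linear_combination a * ρ x ^ (γ - 1) * hdiv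

/-- `(ρ, v)` is a classical stationary compressible barotropic flow with viscosities `μ`, `lam`
and pressure `a ρ ^ γ`. The `i`-th component of `div (ρ v ⊗ v)` is `∑ j, ∂ⱼ (ρ vⱼ vᵢ)`. -/
structure IsSteadyFlow (μ lam a γ : ℝ) (ρ : EuclideanSpace ℝ (Fin N) → ℝ)
    (v : EuclideanSpace ℝ (Fin N) → EuclideanSpace ℝ (Fin N)) : Prop where
  contDiff_density : ContDiff ℝ 1 ρ
  contDiff_velocity : ContDiff ℝ 2 v
  density_nonneg : ∀ x, 0 ≤ ρ x
  continuity : ∀ x, divV N (fun y => ρ y • v y) x = 0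
  momentum : ∀ x, ∀ i, ∑ j, pd N (fun y => ρ y * v y j * v y i) j x =
    -pd N (fun y => a * ρ y ^ γ) i x + μ * lap N (fun y => v y i) x
      + (μ + lam) * pd N (divV N v) i x

/-- The energy flux of a viscous flow without its enthalpy part: the viscous stresses acting on
`v`, minus the transport of kinetic energy. -/
def mechanicalFlux (μ lam : ℝ) (ρ : EuclideanSpace ℝ (Fin N) → ℝ)
    (v : EuclideanSpace ℝ (Fin N) → EuclideanSpace ℝ (Fin N)) (x : EuclideanSpace ℝ (Fin N)) :
    EuclideanSpace ℝ (Fin N) :=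
  (μ / 2) • gradient (fun y => ‖v y‖ ^ 2) x + (μ + lam) • divV N v x • v x
    - (1 / 2 : ℝ) • ‖v x‖ ^ 2 • ρ x • v x

/-- The rate of viscous dissipation of kinetic energy per unit volume, up to a divergence. -/
def dissipation (μ lam : ℝ) (v : EuclideanSpace ℝ (Fin N) → EuclideanSpace ℝ (Fin N))
    (x : EuclideanSpace ℝ (Fin N)) : ℝ :=
  μ * gradNormSq v x + (μ + lam) * divV N v x ^ 2

variable {μ lam a γ : ℝ}

theorem divV_mechanicalFlux (hρ : ContDiff ℝ 1 ρ) (hv : ContDiff ℝ 2 v)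
    (x : EuclideanSpace ℝ (Fin N)) :
    divV N (mechanicalFlux μ lam ρ v) x =
      μ / 2 * lap N (fun y => ‖v y‖ ^ 2) x + (μ + lam) * divV N (fun y => divV N v y • v y) x
        - 1 / 2 * divV N (fun y => ‖v y‖ ^ 2 • ρ y • v y) x := by
  have hv₁ := hv.differentiable two_ne_zero x
  have hgrad := (contDiff_gradient (n := 1) (hv.norm_sq ℝ)).differentiable one_ne_zero x
  have hdil := ((contDiff_divV (n := 1) hv).differentiable one_ne_zero x).fun_smul hv₁
  have hkin := (hv₁.norm_sq ℝ).fun_smul ((hρ.differentiable one_ne_zero x).fun_smul hv₁)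
  unfold mechanicalFlux
  rw [divV_sub ((hgrad.fun_const_smul _).fun_add (hdil.fun_const_smul _))
      (hkin.fun_const_smul _),
    divV_add (hgrad.fun_const_smul _) (hdil.fun_const_smul _), divV_const_smul _ hgrad,
    divV_const_smul _ hdil, divV_const_smul _ hkin, divV_gradient]

namespace IsSteadyFlow

theorem sum_mul_momentum (h : IsSteadyFlow μ lam a γ ρ v) (x : EuclideanSpace ℝ (Fin N)) :
    ∑ i, v x i * divV N (fun y => v y i • ρ y • v y) x =
      -∑ i, v x i * pd N (fun y => a * ρ y ^ γ) i x
        + μ * ∑ i, v x i * lap N (fun y => v y i) x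
        + (μ + lam) * ∑ i, v x i * pd N (divV N v) i x := by
  have hmom (i : Fin N) : divV N (fun y => v y i • ρ y • v y) x =
      -pd N (fun y => a * ρ y ^ γ) i x + μ * lap N (fun y => v y i) x
        + (μ + lam) * pd N (divV N v) i x := by
    rw [← h.momentum x i]
    simp only [divV, PiLp.smul_apply, smul_eq_mul, mul_comm (v _ i)]
  simp only [hmom, mul_add, mul_neg, Finset.sum_add_distrib, Finset.sum_neg_distrib,
    Finset.mul_sum, mul_left_comm (v x _)]

theorem divV_flux_eq_dissipation (h : IsSteadyFlow μ lam a γ ρ v) (hγ : 1 < γ)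
    (x : EuclideanSpace ℝ (Fin N)) :
    divV N (mechanicalFlux μ lam ρ v) x - divV N (enthalpyFlux a γ ρ v) x =
      dissipation μ lam v x := by
  have hρ₁ := h.contDiff_density.differentiable one_ne_zero x
  have hv₁ := h.contDiff_velocity.differentiable two_ne_zero x
  rw [divV_mechanicalFlux h.contDiff_density h.contDiff_velocity, lap_norm_sq h.contDiff_velocity,
    divV_divV_smul h.contDiff_velocity, divV_norm_sq_smul hv₁ (hρ₁.fun_smul hv₁) (h.continuity x),
    h.sum_mul_momentum, divV_enthalpyFlux hγ hρ₁ hv₁ (h.density_nonneg x) (h.continuity x),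
    dissipation]
  ring

end IsSteadyFlow

end EnergyIdentity

section FluxIntegrability

variable {N : ℕ} {μ lam a γ M : ℝ} {q : ℝ≥0∞} {ρ : EuclideanSpace ℝ (Fin N) → ℝ}
  {v : EuclideanSpace ℝ (Fin N) → EuclideanSpace ℝ (Fin N)}

theorem contDiff_enthalpyFlux (hγ : 1 ≤ γ) (hρ : ContDiff ℝ 1 ρ) (hv : ContDiff ℝ 1 v) :
    ContDiff ℝ 1 (enthalpyFlux a γ ρ v) :=
  ((contDiff_const.mul (hρ.rpow_const_of_le (by simpa using hγ))).smul hv).const_smul _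

theorem contDiff_mechanicalFlux (hρ : ContDiff ℝ 1 ρ) (hv : ContDiff ℝ 2 v) :
    ContDiff ℝ 1 (mechanicalFlux μ lam ρ v) := by
  have hv₁ : ContDiff ℝ 1 v := hv.of_le one_le_two
  exact (((contDiff_gradient (n := 1) (hv.norm_sq ℝ)).const_smul _).add
    (((contDiff_divV (n := 1) hv).smul hv₁).const_smul _)).sub
      (((hv₁.norm_sq ℝ).smul (hρ.smul hv₁)).const_smul _)

theorem memLp_enthalpyFlux (hγ : 1 ≤ γ) (hρ : ContDiff ℝ 1 ρ) (hv : ContDiff ℝ 1 v)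
    (hρ₀ : ∀ x, 0 ≤ ρ x) (hρM : ∀ x, |ρ x| ≤ M) (hvq : MemLp v q) :
    MemLp (enthalpyFlux a γ ρ v) q := by
  refine hvq.of_le_mul (c := |γ / (γ - 1)| * (|a| * M ^ γ))
    (contDiff_enthalpyFlux hγ hρ hv).continuous.aestronglyMeasurable (.of_forall fun x => ?_)
  rw [enthalpyFlux, norm_smul, norm_smul, norm_mul, norm_of_nonneg (rpow_nonneg (hρ₀ x) γ),
    Real.norm_eq_abs, Real.norm_eq_abs, ← mul_assoc]
  gcongr
  exacts [hρ₀ x, (le_abs_self _).trans (hρM x)]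

theorem memLp_one_norm_sq_smul (hρ : Continuous ρ) (hρM : ∀ x, |ρ x| ≤ M) (hv3 : MemLp v 3) :
    MemLp (fun x => ‖v x‖ ^ 2 • ρ x • v x) 1 := by
  rw [memLp_one_iff_integrable]
  refine ((hv3.integrable_norm_pow (p := 3) three_ne_zero).const_mul M).mono'
    ((hv3.1.norm.pow 2).smul (hρ.aestronglyMeasurable.smul hv3.1)) (.of_forall fun x => ?_)
  calc ‖‖v x‖ ^ 2 • ρ x • v x‖ = |ρ x| * ‖v x‖ ^ 3 := by
        rw [norm_smul, norm_smul, norm_pow, norm_norm, Real.norm_eq_abs]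
        ring
    _ ≤ M * ‖v x‖ ^ 3 := by
        gcongr
        exact hρM x

theorem memLp_one_gradient_norm_sq (hv : ContDiff ℝ 1 v) (hv2 : MemLp v 2)
    (hgrad : Integrable (gradNormSq v)) : MemLp (gradient fun x => ‖v x‖ ^ 2) 1 :=
  (memLp_fderiv_norm_sq hv hv2 (memLp_two_fderiv hv hgrad)).of_le
    (contDiff_gradient (n := 0) (hv.norm_sq ℝ)).continuous.aestronglyMeasurable
    (.of_forall fun x => (norm_gradient _ x).le)

theorem memLp_one_mechanicalFlux (hρ : Continuous ρ) (hρM : ∀ x, |ρ x| ≤ M) (hv : ContDiff ℝ 2 v)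
    (hgrad : Integrable (gradNormSq v)) (hv2 : MemLp v 2) (hv3 : MemLp v 3) :
    MemLp (mechanicalFlux μ lam ρ v) 1 := by
  have hv₁ : ContDiff ℝ 1 v := hv.of_le one_le_two
  have hgradient := memLp_one_gradient_norm_sq hv₁ hv2 hgrad
  have hdilation : MemLp (fun x => divV N v x • v x) 1 := hv2.smul (memLp_two_divV hv₁ hgrad)
  exact ((hgradient.const_smul (μ / 2)).add (hdilation.const_smul (μ + lam))).sub
    ((memLp_one_norm_sq_smul hρ hρM hv3).const_smul (1 / 2 : ℝ))

theorem integrable_dissipation (hv : ContDiff ℝ 1 v) (hgrad : Integrable (gradNormSq v)) :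
    Integrable (dissipation μ lam v) :=
  (hgrad.const_mul μ).add ((memLp_two_divV hv hgrad).integrable_sq.const_mul (μ + lam))

theorem continuous_dissipation (hv : ContDiff ℝ 1 v) : Continuous (dissipation μ lam v) :=
  (continuous_const.mul (continuous_gradNormSq hv)).add
    (continuous_const.mul ((contDiff_divV (n := 0) hv).continuous.pow 2))

end FluxIntegrability

section Rigidity

theorem eq_zero_of_memLp_of_fderiv_eq_zero {E F : Type*} [NormedAddCommGroup E] [NormedSpace ℝ E]
    [FiniteDimensional ℝ E] [Nontrivial E] [MeasurableSpace E] [BorelSpace E] {μ : Measure E}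
    [μ.IsAddHaarMeasure] [NormedAddCommGroup F] [NormedSpace ℝ F] {u : E → F} {q : ℝ≥0∞}
    (hu : Differentiable ℝ u) (hu' : ∀ x, fderiv ℝ u x = 0) (hq₀ : q ≠ 0) (hq : q ≠ ∞)
    (huq : MemLp u q μ) (x : E) : u x = 0 := by
  have hconst : u = fun _ => u x := funext fun y => is_const_of_fderiv_eq_zero hu hu' y x
  rw [hconst, memLp_const_iff hq₀ hq, measure_univ_of_isAddLeftInvariant] at huq
  simpa using huq

variable {N : ℕ} {μ lam a γ : ℝ} {q : ℝ≥0∞} {ρ : EuclideanSpace ℝ (Fin N) → ℝ}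
  {v : EuclideanSpace ℝ (Fin N) → EuclideanSpace ℝ (Fin N)}

theorem gradNormSq_eq_zero_of_integral_dissipation_eq_zero (hμ : 0 < μ) (hlam : 0 ≤ lam + μ)
    (hv : ContDiff ℝ 1 v) (hgrad : Integrable (gradNormSq v))
    (hzero : ∫ x, dissipation μ lam v x = 0) (x : EuclideanSpace ℝ (Fin N)) :
    gradNormSq v x = 0 := by
  have hdil (x) : 0 ≤ (μ + lam) * divV N v x ^ 2 := mul_nonneg (by linarith) (sq_nonneg _)
  have hgrad₀ (x) : 0 ≤ μ * gradNormSq v x := mul_nonneg hμ.le (gradNormSq_nonneg v x)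
  have hae := (integral_eq_zero_iff_of_nonneg (fun x => add_nonneg (hgrad₀ x) (hdil x))
    (integrable_dissipation hv hgrad)).1 hzero
  have hx : μ * gradNormSq v x + (μ + lam) * divV N v x ^ 2 = 0 :=
    congrFun (((continuous_dissipation hv).ae_eq_iff_eq volume continuous_const).1 hae) x
  exact (mul_eq_zero.1 ((add_eq_zero_iff_of_nonneg (hgrad₀ x) (hdil x)).1 hx).1).resolve_left hμ.ne'

theorem eq_zero_of_integral_dissipation_eq_zero (hN : 0 < N) (hμ : 0 < μ) (hlam : 0 ≤ lam + μ)
    (hv : ContDiff ℝ 1 v) (hgrad : Integrable (gradNormSq v)) (hq₀ : q ≠ 0) (hq : q ≠ ∞)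
    (hvq : MemLp v q) (hzero : ∫ x, dissipation μ lam v x = 0) (x : EuclideanSpace ℝ (Fin N)) :
    v x = 0 := by
  have hgrad₀ := gradNormSq_eq_zero_of_integral_dissipation_eq_zero hμ hlam hv hgrad hzero
  have hfderiv (x) : fderiv ℝ v x = 0 := by
    simpa [hgrad₀] using norm_fderiv_sq_le_gradNormSq (hv.differentiable one_ne_zero x)
  have : Nontrivial (EuclideanSpace ℝ (Fin N)) := by
    rwa [← Module.finrank_pos_iff (R := ℝ), finrank_euclideanSpace_fin]
  exact eq_zero_of_memLp_of_fderiv_eq_zero (hv.differentiable one_ne_zero) hfderiv hq₀ hq hvq x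

namespace IsSteadyFlow

theorem integral_dissipation_eq_zero [ENNReal.HolderConjugate N q] (h : IsSteadyFlow μ lam a γ ρ v)
    (hγ : 1 < γ) (hq : q ≠ ∞) (hρb : ∃ M, ∀ x, |ρ x| ≤ M) (hgrad : Integrable (gradNormSq v))
    (hvq : MemLp v q) (hv2 : MemLp v 2) (hv3 : MemLp v 3) :
    ∫ x, dissipation μ lam v x = 0 := by
  obtain ⟨M, hM⟩ := hρb
  have hρ := h.contDiff_density
  have hv := h.contDiff_velocity
  have hv₁ : ContDiff ℝ 1 v := hv.of_le one_le_two
  simp only [← h.divV_flux_eq_dissipation hγ]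
  refine integral_divV_sub_divV_eq_zero hq (contDiff_mechanicalFlux hρ hv)
    (contDiff_enthalpyFlux hγ.le hρ hv₁)
    (memLp_one_mechanicalFlux hρ.continuous hM hv hgrad hv2 hv3)
    (memLp_enthalpyFlux hγ.le hρ hv₁ h.density_nonneg hM hvq) ?_
  simpa only [h.divV_flux_eq_dissipation hγ] using integrable_dissipation hv₁ hgrad

theorem density_eq_of_velocity_eq_zero (h : IsSteadyFlow μ lam a γ ρ v) (ha : a ≠ 0) (hγ : 1 ≤ γ)
    (hv : ∀ x, v x = 0) (x y : EuclideanSpace ℝ (Fin N)) : ρ x = ρ y := by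
  have hp : Differentiable ℝ fun x => a * ρ x ^ γ := fun x =>
    (((h.contDiff_density.differentiable one_ne_zero x).rpow_const (.inr hγ)).const_mul a)
  have hpd (j : Fin N) (x) : pd N (fun y => a * ρ y ^ γ) j x = 0 := by
    have hzero (k : Fin N) : pd N (fun _ => 0) k = fun _ => 0 := by ext; simp [pd]
    have hdiv : divV N v = fun _ => 0 := by ext; simp [divV, hv, hzero]
    simpa [hv, hdiv, lap, hzero] using h.momentum x j
  have hfderiv (x) : fderiv ℝ (fun x => a * ρ x ^ γ) x = 0 := by
    ext y
    simp [fderiv_apply_eq_sum_pd, hpd]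
  exact (rpow_left_inj (h.density_nonneg x) (h.density_nonneg y) (by linarith)).1
    (mul_left_cancel₀ ha (is_const_of_fderiv_eq_zero hp hfderiv x y))

end IsSteadyFlow

end Rigidity

theorem liouville_NS_general {N : ℕ} (hN : 2 ≤ N) {μ lam a γ : ℝ} (hμ : 0 < μ) (hlam : 0 ≤ lam + μ)
    (ha : a ≠ 0) (hγ : 1 < γ) {ρ : EuclideanSpace ℝ (Fin N) → ℝ}
    {v : EuclideanSpace ℝ (Fin N) → EuclideanSpace ℝ (Fin N)} (h : IsSteadyFlow μ lam a γ ρ v)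
    (hρb : ∃ M, ∀ x, |ρ x| ≤ M) (hgrad : Integrable (gradNormSq v))
    {q : ℝ≥0∞} [hNq : ENNReal.HolderConjugate N q] (hvq : MemLp v q) (hv3 : 7 ≤ N → MemLp v 3) :
    (∀ x, v x = 0) ∧ ∃ c, ∀ x, ρ x = c := by
  have hv₁ : ContDiff ℝ 1 v := h.contDiff_velocity.of_le one_le_two
  have hq₂ : q ≤ 2 := le_two_of_holderConjugate (p := N) (mod_cast hN)
  have hq₀ : q ≠ 0 := hNq.symm.ne_zero
  have hq : q ≠ ∞ := (hq₂.trans_lt (by simp)).ne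
  have hv3' : MemLp v 3 := by
    rcases le_or_gt 7 N with hN7 | hN7
    · exact hv3 hN7
    · have : ENNReal.HolderConjugate (Module.finrank ℝ (EuclideanSpace ℝ (Fin N))) q := by simpa
      exact memLp_three_of_holderConjugate_finrank hv₁ hvq (memLp_two_fderiv hv₁ hgrad)
        (by simpa) (by simp; omega)
  have hv2 : MemLp v 2 := memLp_of_memLp_of_memLp hvq hv3' hq₀ hq₂ (by norm_num)
  have hv₀ := eq_zero_of_integral_dissipation_eq_zero (by omega) hμ hlam hv₁ hgrad hq₀ hq hvq
    (h.integral_dissipation_eq_zero hγ hq hρb hgrad hvq hv2 hv3')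
  exact ⟨hv₀, ρ 0, fun x => h.density_eq_of_velocity_eq_zero ha hγ.le hv₀ x 0⟩

/-- Liouville type theorem for the stationary compressible Navier–Stokes
system on `ℝ^N`, `N ≥ 2`. -/
theorem liouville_NS
    (N : ℕ) (hN : 2 ≤ N)
    (μ lam a γ : ℝ)
    (hμ : 0 < μ) (hlam : 0 < lam + μ) (ha : 0 < a) (hγ : 1 < γ)
    (ρ : EuclideanSpace ℝ (Fin N) → ℝ)
    (v : EuclideanSpace ℝ (Fin N) → EuclideanSpace ℝ (Fin N))
    (hρsm : ContDiff ℝ (⊤ : ℕ∞) ρ) (hvsm : ContDiff ℝ (⊤ : ℕ∞) v)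
    (hρnn : ∀ x, 0 ≤ ρ x)
    -- continuity equation: div(ρ v) = 0
    (hcont : ∀ x, ∑ j, pd N (fun y => ρ y * v y j) j x = 0)
    -- momentum equation: div(ρ v ⊗ v) = -∇p + μ Δv + (μ+λ) ∇ div v,  p = a ρ^γ
    (hmom : ∀ x, ∀ i : Fin N,
      ∑ j, pd N (fun y => ρ y * v y j * v y i) j x =
        - pd N (fun y => a * ρ y ^ γ) i x
          + μ * lap N (fun y => v y i) x + (μ + lam) * pd N (divV N v) i x)
    -- ρ ∈ L^∞
    (hρb : ∃ M, ∀ x, |ρ x| ≤ M)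
    -- ∇v ∈ L²
    (hgrad : Integrable (fun x => ∑ i, ∑ j, (pd N (fun y => v y i) j x) ^ 2))
    -- v ∈ L^{N/(N-1)}
    (hvL : Integrable (fun x => ‖v x‖ ^ ((N : ℝ) / ((N : ℝ) - 1))))
    -- additionally v ∈ L^{3N/(N-1)} if N ≥ 7
    (hvL7 : 7 ≤ N →
      Integrable (fun x => ‖v x‖ ^ ((3 * (N : ℝ)) / ((N : ℝ) - 1)))) :
    (∀ x, v x = 0) ∧ (∃ c : ℝ, ∀ x, ρ x = c) := by
  have hflow : IsSteadyFlow μ lam a γ ρ v :=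
    ⟨mod_cast contDiff_infty.1 hρsm 1, mod_cast contDiff_infty.1 hvsm 2, hρnn, hcont, hmom⟩
  have hN₀ : 0 < (N : ℝ) - 1 := sub_pos.2 (mod_cast hN)
  have hmeas := hvsm.continuous.aestronglyMeasurable (μ := volume)
  have hconj := holderConjugate_natCast_ofReal hN
  have hvq := memLp_ofReal_of_integrable_norm_rpow hmeas (by positivity) hvL
  refine liouville_NS_general hN hμ hlam.le ha.ne' hγ hflow hρb hgrad hvq fun hN7 => ?_
  have hvr := memLp_ofReal_of_integrable_norm_rpow hmeas (by positivity) (hvL7 hN7)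
  have hq₂ := le_two_of_holderConjugate (hpq := hconj) (mod_cast hN)
  exact memLp_of_memLp_of_memLp hvq hvr hconj.symm.ne_zero (hq₂.trans (by norm_num))
    (three_le_ofReal_div hN)
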